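/- Let T < ∞, let a ∈ (0,1), and let (f,p) be a solution of problem (P) on (0,T] with initial datum f_I satisfying conditions (i)–(iii). Then there exists ε > 0 (depending on T and the solution) such that p(t) ∈ [−1+ε, 1−ε] for all t ∈ (0,T]. -/

import Mathlib

open MeasureTheory

/-- The 1D heat kernel `K(x,t) = (4πt)^{-1/2} exp(-x²/(4t))`. -/
noncomputable def heatK (x t : ℝ) : ℝ :=
  (Real.sqrt (4 * Real.pi * t))⁻¹ * Real.exp (-(x ^ 2) / (4 * t))

/-- The Neumann heat kernel on `[-1,1]`:
`Γ(x,x';t) = Σ_{k∈ℤ} K(x − (2k + (−1)^{|k|} x'), t)`. -/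
noncomputable def heatGamma (x x' t : ℝ) : ℝ :=
  ∑' k : ℤ, heatK (x - (2 * (k : ℝ) + (-1 : ℝ) ^ k.natAbs * x')) t

/-- The flux `λ(s) = −∂ₓ f(p(s), s)` at the free boundary. -/
noncomputable def flux (f : ℝ → ℝ → ℝ) (p : ℝ → ℝ) (s : ℝ) : ℝ :=
  -deriv (fun x => f x s) (p s)

/-- `ā(s) = min {a, 1 − p(s), 1 + p(s)}`. -/
noncomputable def abar (a : ℝ) (p : ℝ → ℝ) (s : ℝ) : ℝ :=
  min a (min (1 - p s) (1 + p s))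

/-- The sup norm `‖h‖_{L^∞(−1,1)}` (for continuous `h`). -/
noncomputable def supNorm (h : ℝ → ℝ) : ℝ := ⨆ x : Set.Icc (-1:ℝ) 1, |h x.1|

/-- Conditions (i)–(iii) on the initial datum `f_I ∈ C²([−1,1])`:
(i) unique zero `p_I ∈ (−1,1)`, positive to the left, negative to the right;
(ii) Neumann conditions `∂ₓf_I(±1) = 0`;
(iii) `λ_I = −∂ₓ f_I(p_I) > 0` and `−∂ₓ f_I > λ_I/2` on `(p_I − a₀, p_I + a₀)`. -/
structure IsInitialDatum (fI : ℝ → ℝ) (pI a₀ lamI : ℝ) : Prop where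
  smooth : ContDiffOn ℝ 2 fI (Set.Icc (-1) 1)
  pI_mem : pI ∈ Set.Ioo (-1 : ℝ) 1
  zero_at : fI pI = 0
  pos_left : ∀ x ∈ Set.Ico (-1 : ℝ) pI, 0 < fI x
  neg_right : ∀ x ∈ Set.Ioc pI 1, fI x < 0
  neumann_left : derivWithin fI (Set.Icc (-1) 1) (-1) = 0
  neumann_right : derivWithin fI (Set.Icc (-1) 1) 1 = 0
  lamI_eq : lamI = -deriv fI pI
  lamI_pos : 0 < lamI
  slope : ∀ x ∈ Set.Ioo (pI - a₀) (pI + a₀), lamI / 2 < -deriv fI x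

/-- A solution `(f, p)` of problem (P) on the time set `J` with parameter `a` and
initial datum `f_I`: `p` is a continuous curve in `(−1,1)`, `p(t)` is the unique zero
of `f(·,t)` (positive to the left, negative to the right), `f(·,t)` is differentiable
at `p(t)`, the flux is locally integrable on `J`, and the Duhamel identity holds. -/
structure IsSolutionP (a : ℝ) (fI : ℝ → ℝ) (J : Set ℝ) (f : ℝ → ℝ → ℝ) (p : ℝ → ℝ) : Prop where
  p_cont : ContinuousOn p J
  p_mem : ∀ t ∈ J, p t ∈ Set.Ioo (-1 : ℝ) 1
  zero_at : ∀ t ∈ J, f (p t) t = 0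
  pos_left : ∀ t ∈ J, ∀ x ∈ Set.Ico (-1 : ℝ) (p t), 0 < f x t
  neg_right : ∀ t ∈ J, ∀ x ∈ Set.Ioc (p t) 1, f x t < 0
  diff_at : ∀ t ∈ J, DifferentiableAt ℝ (fun x => f x t) (p t)
  flux_loc_int : LocallyIntegrableOn (flux f p) J
  duhamel : ∀ t ∈ J, ∀ x ∈ Set.Icc (-1 : ℝ) 1,
      f x t = (∫ x' in (-1 : ℝ)..1, heatGamma x x' t * fI x')
        + ∫ s in (0 : ℝ)..t,
            (heatGamma x (p s - abar a p s) (t - s)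
              - heatGamma x (p s + abar a p s) (t - s)) * flux f p s

/-- The Duhamel iterate with data `(p_n, λ_n)` and initial datum `f_I`. -/
noncomputable def duhamelIterate (a : ℝ) (fI pn lamn : ℝ → ℝ) (x t : ℝ) : ℝ :=
  (∫ x' in (-1 : ℝ)..1, heatGamma x x' t * fI x')
    + ∫ s in (0 : ℝ)..t,
        (heatGamma x (pn s - a) (t - s) - heatGamma x (pn s + a) (t - s)) * lamn s

/-!
With `b = ā(s)`, the dipole `Γ(x, p - b) - Γ(x, p + b)` in Duhamel's formula equals a weight
`sin (π(p + 1)/2) sin (πb/2)`, which vanishes when source and sink cancel, times a profile that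
depends continuously on parameters in a compact set, including those where the weight is zero.
The profile is real analytic in `x` and never vanishes identically. Hence, if for one time `t` the
Duhamel integrand is integrable for every `x` in an interval, then weight times flux is integrable
down to time `0`. In that case, tested against a bump function, the source term tends to `0` with
`t`. In the other case the Duhamel integral, being divergent, is `0` by convention at some point of
the interval.

Choose the interval where `f_I > 0`. For small `t` the heat flow of `f_I` is bounded below by a
positive constant there, so in both cases `f(·, t)` is positive at some point of the interval, and
`p(t)` lies to the right of that point. The interval where `f_I < 0` bounds `p(t)` from above, and
the remaining times form a compact set, on which the continuous `p` stays away from `±1`.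
-/

section

open Set Filter Topology Real MeasureTheory

/-! ### Cosine expansion of the Neumann heat kernel -/

/-- The `n`-th Neumann eigenmode `cos (nπ(x + 1)/2)` of `[-1, 1]`. Indexing by `ℤ` turns the
expansion of the heat kernel into a theta series; the modes `n` and `-n` coincide. -/
noncomputable def cosMode (n : ℤ) (x : ℝ) : ℝ :=
  cos (n * (π * (x + 1) / 2))

/-- The factor `exp (-(nπ/2)² t)` by which the heat equation damps `cosMode n` up to time `t`. -/
noncomputable def modeDecay (t : ℝ) (n : ℤ) : ℝ :=
  exp (-(π ^ 2 * t / 4 * (n : ℝ) ^ 2))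

lemma summable_abs_pow_mul_exp_neg_sq (k : ℕ) {c : ℝ} (hc : 0 < c) (R : ℝ) :
    Summable fun n : ℤ => |(n : ℝ)| ^ k * exp (-(c * (n : ℝ) ^ 2) + R * |(n : ℝ)|) := by
  refine (summable_pow_mul_jacobiTheta₂_term_bound (R / (2 * π)) (T := c / π)
    (by positivity) k).congr fun n => ?_
  rw [Int.cast_abs]
  congr 2
  field_simp
  ring

lemma summable_abs_pow_mul_modeDecay (k : ℕ) {t : ℝ} (ht : 0 < t) :
    Summable fun n : ℤ => |(n : ℝ)| ^ k * modeDecay t n := by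
  simpa only [zero_mul, add_zero] using!
    summable_abs_pow_mul_exp_neg_sq k (c := π ^ 2 * t / 4) (by positivity) 0

lemma modeDecay_pos (t : ℝ) (n : ℤ) : 0 < modeDecay t n := exp_pos _

lemma modeDecay_neg (t : ℝ) (n : ℤ) : modeDecay t (-n) = modeDecay t n := by
  simp only [modeDecay, Int.cast_neg, neg_sq]

lemma modeDecay_zero_right (t : ℝ) : modeDecay t 0 = 1 := by simp [modeDecay]

lemma modeDecay_anti (n : ℤ) : Antitone fun t => modeDecay t n := fun s t hst => by
  simp only [modeDecay]
  gcongr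

lemma cosMode_neg (n : ℤ) (x : ℝ) : cosMode (-n) x = cosMode n x := by
  simp only [cosMode, Int.cast_neg, neg_mul, cos_neg]

lemma cosMode_zero (x : ℝ) : cosMode 0 x = 1 := by simp [cosMode]

lemma abs_cosMode_le_one (n : ℤ) (x : ℝ) : |cosMode n x| ≤ 1 := abs_cos_le_one _

lemma continuous_cosMode (n : ℤ) : Continuous (cosMode n) := by
  unfold cosMode
  fun_prop

open HurwitzZeta in
lemma hasSum_modeDecay_mul_cos (u : ℝ) {t : ℝ} (ht : 0 < t) :
    HasSum (fun n : ℤ => modeDecay t n * cos (n * (π * u / 2)))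
      (cosKernel (u / 4 : ℝ) (π * t / 4)) := by
  have h := Complex.hasSum_re (hasSum_int_cosKernel (u / 4) (t := π * t / 4) (by positivity))
  convert! h using 2 with n
  have hphase : 2 * (π : ℂ) * Complex.I * ((u / 4 : ℝ) : ℂ) * n
      = ((n * (π * u / 2) : ℝ) : ℂ) * Complex.I := by
    push_cast
    ring
  rw [hphase, Complex.re_mul_ofReal, Complex.exp_ofReal_mul_I_re, mul_comm, modeDecay]
  ring_nf

open HurwitzZeta in
lemma hasSum_heatK_sub_four_mul (u : ℝ) {t : ℝ} (ht : 0 < t) :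
    HasSum (fun j : ℤ => heatK (u - 4 * j) t)
      (1 / 4 * cosKernel (u / 4 : ℝ) (π * t / 4)) := by
  have h := (hasSum_int_evenKernel (-(u / 4)) (t := 1 / (π * t / 4)) (by positivity)).mul_left
    (√(4 * π * t))⁻¹
  rw [AddCircle.coe_neg, evenKernel_neg, evenKernel_functional_equation, one_div_one_div,
    ← sqrt_eq_rpow] at h
  have hsqrt : √(4 * π * t) = 4 * √(π * t / 4) := by
    rw [show 4 * π * t = 4 ^ 2 * (π * t / 4) by ring, sqrt_mul (by positivity),
      sqrt_sq (by norm_num)]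
  convert! h using 1
  · ext j
    rw [heatK]
    congr 2
    field_simp
    ring
  · rw [hsqrt, one_div (π * t / 4), sqrt_inv]
    have := (sqrt_pos.mpr (by positivity : 0 < π * t / 4)).ne'
    field_simp

lemma hasSum_of_even_odd {f : ℤ → ℝ} {A B : ℝ} (he : HasSum (fun k => f (2 * k)) A)
    (ho : HasSum (fun k => f (2 * k + 1)) B) : HasSum f (A + B) := by
  have hinj : Function.Injective fun k : ℤ => 2 * k := fun a b h => by simpa using h
  have hinj' : Function.Injective fun k : ℤ => 2 * k + 1 := fun a b h => by simpa using h
  refine (hinj.hasSum_range_iff.mpr he).add_isCompl ?_ (hinj'.hasSum_range_iff.mpr ho)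
  rw [range_two_mul, range_two_mul_add_one]
  exact Int.isCompl_even_odd

open HurwitzZeta in
lemma heatGamma_eq_cosKernel (x y : ℝ) {t : ℝ} (ht : 0 < t) :
    heatGamma x y t = 1 / 4 * cosKernel ((x - y) / 4 : ℝ) (π * t / 4)
      + 1 / 4 * cosKernel ((x + y - 2) / 4 : ℝ) (π * t / 4) := by
  refine (hasSum_of_even_odd ?_ ?_).tsum_eq
  · convert! hasSum_heatK_sub_four_mul (x - y) ht using 3 with k
    rw [(Int.natAbs_even.mpr (even_two_mul k)).neg_one_pow]
    push_cast
    ring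
  · convert! hasSum_heatK_sub_four_mul (x + y - 2) ht using 3 with k
    rw [(Int.natAbs_odd.mpr (odd_two_mul_add_one k)).neg_one_pow]
    push_cast
    ring

theorem hasSum_heatGamma (x y : ℝ) {t : ℝ} (ht : 0 < t) :
    HasSum (fun n : ℤ => 1 / 2 * (modeDecay t n * (cosMode n x * cosMode n y)))
      (heatGamma x y t) := by
  rw [heatGamma_eq_cosKernel x y ht]
  convert! ((hasSum_modeDecay_mul_cos (x - y) ht).mul_left (1 / 4)).add
    ((hasSum_modeDecay_mul_cos (x + y - 2) ht).mul_left (1 / 4)) using 2 with n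
  have hsub : n * (π * (x - y) / 2) = n * (π * (x + 1) / 2) - n * (π * (y + 1) / 2) := by ring
  have hadd : n * (π * (x + y - 2) / 2)
      = n * (π * (x + 1) / 2) + n * (π * (y + 1) / 2) - n * (2 * π) := by ring
  rw [hsub, hadd, cos_sub_int_mul_two_pi, cos_sub, cos_add, cosMode, cosMode]
  ring

lemma heatK_nonneg (x t : ℝ) : 0 ≤ heatK x t := by
  unfold heatK
  positivity

lemma heatGamma_nonneg (x y t : ℝ) : 0 ≤ heatGamma x y t :=
  tsum_nonneg fun _ => heatK_nonneg _ _

lemma heatGamma_comm (x y : ℝ) {t : ℝ} (ht : 0 < t) : heatGamma x y t = heatGamma y x t := by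
  rw [← (hasSum_heatGamma x y ht).tsum_eq, ← (hasSum_heatGamma y x ht).tsum_eq]
  simp only [mul_comm (cosMode _ x)]

lemma measurable_heatK : Measurable fun q : ℝ × ℝ => heatK q.1 q.2 := by
  unfold heatK
  fun_prop

lemma measurable_heatGamma : Measurable fun q : ℝ × ℝ × ℝ => heatGamma q.1 q.2.1 q.2.2 := by
  unfold heatGamma
  exact Measurable.tsum fun k => measurable_heatK.comp
    (f := fun q : ℝ × ℝ × ℝ => (q.1 - (2 * (k : ℝ) + (-1) ^ k.natAbs * q.2.1), q.2.2)) (by fun_prop)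

lemma abs_mul_cosMode_le (r : ℝ) (n : ℤ) (x : ℝ) : |r * cosMode n x| ≤ |r| := by
  rw [abs_mul]
  exact mul_le_of_le_one_right (abs_nonneg r) (abs_cosMode_le_one n x)

lemma summable_mul_cosMode {a : ℤ → ℝ} (ha : Summable a) (x : ℝ) :
    Summable fun n => a n * cosMode n x :=
  .of_norm_bounded ha.norm fun n => abs_mul_cosMode_le (a n) n x

lemma continuous_tsum_mul_cosMode {a : ℤ → ℝ} (ha : Summable a) :
    Continuous fun x => ∑' n, a n * cosMode n x :=
  continuous_tsum (fun n => continuous_const.mul (continuous_cosMode n)) ha.norm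
    fun n x => abs_mul_cosMode_le (a n) n x

lemma summable_modeDecay {t : ℝ} (ht : 0 < t) : Summable (modeDecay t) := by
  simpa only [pow_zero, one_mul] using! summable_abs_pow_mul_modeDecay 0 ht

lemma heatGamma_eq_tsum (x y : ℝ) {t : ℝ} (ht : 0 < t) :
    heatGamma x y t = ∑' n, 1 / 2 * modeDecay t n * cosMode n x * cosMode n y := by
  simp only [← (hasSum_heatGamma x y ht).tsum_eq, mul_assoc]

lemma continuous_heatGamma_right (x : ℝ) {t : ℝ} (ht : 0 < t) :
    Continuous fun y => heatGamma x y t := by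
  simp only [heatGamma_eq_tsum x _ ht]
  exact continuous_tsum_mul_cosMode
    (summable_mul_cosMode ((summable_modeDecay ht).mul_left (1 / 2)) x)

lemma cosMode_mul_cosMode (n m : ℤ) (x : ℝ) :
    cosMode n x * cosMode m x = 1 / 2 * (cosMode (n - m) x + cosMode (n + m) x) := by
  simp only [cosMode, Int.cast_sub, Int.cast_add, sub_mul, add_mul, cos_sub, cos_add]
  ring

lemma integral_cosMode (n : ℤ) : ∫ x in (-1 : ℝ)..1, cosMode n x = if n = 0 then 2 else 0 := by
  split_ifs with hn
  · subst hn
    simp only [cosMode_zero, intervalIntegral.integral_const, smul_eq_mul]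
    norm_num
  · have hk : (n : ℝ) * (π / 2) ≠ 0 :=
      mul_ne_zero (by exact_mod_cast hn) (by positivity)
    have hmode : cosMode n = fun x => cos (n * (π / 2) * x + n * (π / 2)) := by
      ext x
      rw [cosMode]
      ring_nf
    rw [hmode, intervalIntegral.integral_comp_mul_add _ hk, integral_cos,
      show (n : ℝ) * (π / 2) * 1 + n * (π / 2) = n * π by ring,
      show (n : ℝ) * (π / 2) * -1 + n * (π / 2) = 0 by ring,
      sin_int_mul_pi, sin_zero, sub_zero, smul_zero]

lemma integral_cosMode_mul_cosMode (n m : ℤ) : ∫ x in (-1 : ℝ)..1, cosMode n x * cosMode m x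
    = (if n = m then 1 else 0) + if n = -m then 1 else 0 := by
  simp only [cosMode_mul_cosMode]
  rw [intervalIntegral.integral_const_mul, intervalIntegral.integral_add
    ((continuous_cosMode _).intervalIntegrable _ _) ((continuous_cosMode _).intervalIntegrable _ _),
    integral_cosMode, integral_cosMode, mul_add]
  simp only [sub_eq_zero, add_eq_zero_iff_eq_neg, mul_ite, mul_zero]
  norm_num

theorem integral_tsum_mul_cosMode {a : ℤ → ℝ} (ha : Summable a) (m : ℤ) :
    ∫ x in (-1 : ℝ)..1, (∑' n, a n * cosMode n x) * cosMode m x = a m + a (-m) := by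
  have hsum := intervalIntegral.hasSum_integral_of_dominated_convergence
    (F := fun n x => a n * cosMode n x * cosMode m x)
    (f := fun x => (∑' n, a n * cosMode n x) * cosMode m x) (μ := volume) (a := -1) (b := 1)
    (fun n _ => |a n|)
    (fun n => ((continuous_const.mul (continuous_cosMode n)).mul
      (continuous_cosMode m)).aestronglyMeasurable)
    (fun n => .of_forall fun x _ => by
      rw [norm_mul]
      exact (mul_le_of_le_one_right (abs_nonneg _) (abs_cosMode_le_one m x)).trans
        (abs_mul_cosMode_le (a n) n x))
    (.of_forall fun _ _ => ha.abs) intervalIntegrable_const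
    (.of_forall fun x _ => (summable_mul_cosMode ha x).hasSum.mul_right _)
  refine hsum.unique ?_
  convert! (hasSum_ite_eq m (a m)).add (hasSum_ite_eq (-m) (a (-m))) using 2 with n
  simp only [mul_assoc, intervalIntegral.integral_const_mul, integral_cosMode_mul_cosMode]
  split_ifs <;> simp_all [mul_add]

lemma integral_heatGamma_mul_cosMode (x : ℝ) {t : ℝ} (ht : 0 < t) (m : ℤ) :
    ∫ y in (-1 : ℝ)..1, heatGamma x y t * cosMode m y = modeDecay t m * cosMode m x := by
  simp only [heatGamma_eq_tsum x _ ht]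
  rw [integral_tsum_mul_cosMode
    (summable_mul_cosMode ((summable_modeDecay ht).mul_left (1 / 2)) x), modeDecay_neg, cosMode_neg]
  ring

lemma integral_heatGamma (x : ℝ) {t : ℝ} (ht : 0 < t) :
    ∫ y in (-1 : ℝ)..1, heatGamma x y t = 1 := by
  simpa only [cosMode_zero, mul_one, modeDecay_zero_right]
    using integral_heatGamma_mul_cosMode x ht 0

/-! ### The heat flow at small times -/

lemma exists_le_add_mul_of_isCompact {X : Type*} [TopologicalSpace X] {K : Set X} (hK : IsCompact K)
    {F D : X → ℝ} (hF : ContinuousOn F K) (hD : ContinuousOn D K) (hD0 : ∀ x ∈ K, 0 ≤ D x)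
    (hFD : ∀ x ∈ K, D x = 0 → F x ≤ 0) {ε : ℝ} (hε : 0 < ε) :
    ∃ L ≥ 0, ∀ x ∈ K, F x ≤ ε + L * D x := by
  have hfar : IsCompact (K ∩ F ⁻¹' Ici ε) := by
    obtain ⟨C, hC, hCeq⟩ := continuousOn_iff_isClosed.mp hF _ (isClosed_Ici (a := ε))
    rw [inter_comm, hCeq, inter_comm]
    exact hK.inter_right hC
  have hpos : ∀ x ∈ K ∩ F ⁻¹' Ici ε, 0 < D x := fun x hx =>
    (hD0 x hx.1).lt_of_ne' fun h => hε.not_ge (hx.2.trans (hFD x hx.1 h))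
  obtain ⟨L, hL⟩ := (hfar.bddAbove_image (f := fun x => F x / D x) ((hF.mono inter_subset_left).div
    (hD.mono inter_subset_left) fun x hx => (hpos x hx).ne'))
  refine ⟨max L 0, le_max_right _ _, fun x hx => ?_⟩
  rcases le_or_gt ε (F x) with h | h
  · have hD' := hpos x ⟨hx, h⟩
    have := (div_le_iff₀ hD').mp ((hL (mem_image_of_mem _ ⟨hx, h⟩)).trans (le_max_left L 0))
    linarith
  · have := mul_nonneg (le_max_right L 0) (hD0 x hx)
    linarith

lemma injOn_cosMode_one : InjOn (cosMode 1) (Icc (-1) 1) := by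
  have hcomp : cosMode 1 = cos ∘ fun x => π / 2 * (x + 1) := by
    ext x
    rw [cosMode, Int.cast_one, one_mul, Function.comp_apply]
    ring_nf
  have hpi : 0 < π / 2 := half_pos pi_pos
  rw [hcomp]
  refine injOn_cos.comp (fun x _ y _ hxy => ?_) fun x hx => ⟨?_, ?_⟩
  · exact add_right_cancel (mul_left_cancel₀ hpi.ne' hxy)
  · exact mul_nonneg hpi.le (by linarith [hx.1])
  · nlinarith [hx.2]

/-- The Neumann heat evolution on `[-1, 1]` of the initial datum `g`. -/
noncomputable def heatFlow (g : ℝ → ℝ) (x t : ℝ) : ℝ :=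
  ∫ y in (-1 : ℝ)..1, heatGamma x y t * g y

lemma integral_heatGamma_mul_sq_cosMode_sub (x : ℝ) {t : ℝ} (ht : 0 < t) :
    ∫ y in (-1 : ℝ)..1, heatGamma x y t * (cosMode 1 y - cosMode 1 x) ^ 2
      = (1 - modeDecay t 2) / 2
        + cosMode 1 x ^ 2 * (1 + modeDecay t 2 - 2 * modeDecay t 1) := by
  have hG := continuous_heatGamma_right x ht
  have hint (m : ℤ) (c : ℝ) :
      IntervalIntegrable (fun y => c * (heatGamma x y t * cosMode m y)) volume (-1) 1 :=
    (continuous_const.mul (hG.mul (continuous_cosMode m))).intervalIntegrable _ _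
  have hsplit (y : ℝ) : heatGamma x y t * (cosMode 1 y - cosMode 1 x) ^ 2
      = (1 / 2 + cosMode 1 x ^ 2) * (heatGamma x y t * cosMode 0 y)
        + 1 / 2 * (heatGamma x y t * cosMode 2 y)
        + -2 * cosMode 1 x * (heatGamma x y t * cosMode 1 y) := by
    have h := cosMode_mul_cosMode 1 1 y
    norm_num at h
    rw [cosMode_zero] at h ⊢
    linear_combination heatGamma x y t * h
  simp only [hsplit]
  rw [intervalIntegral.integral_add ((hint 0 _).add (hint 2 _)) (hint 1 _),
    intervalIntegral.integral_add (hint 0 _) (hint 2 _)]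
  simp only [intervalIntegral.integral_const_mul, integral_heatGamma_mul_cosMode x ht]
  have h := cosMode_mul_cosMode 1 1 x
  norm_num [cosMode_zero, modeDecay_zero_right] at h ⊢
  linear_combination (-modeDecay t 2) * h

lemma tendsto_modeDecay_zero (n : ℤ) : Tendsto (fun t => modeDecay t n) (𝓝[>] 0) (𝓝 1) := by
  have h : Continuous fun t => modeDecay t n := by
    unfold modeDecay
    fun_prop
  simpa [modeDecay] using (h.tendsto 0).mono_left nhdsWithin_le_nhds

lemma abs_heatFlow_sub_le {g : ℝ → ℝ} (hg : ContinuousOn g (Icc (-1) 1)) {x t ε L : ℝ} (ht : 0 < t)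
    (hL : ∀ y ∈ Icc (-1 : ℝ) 1, |g y - g x| ≤ ε + L * (cosMode 1 y - cosMode 1 x) ^ 2) :
    |heatFlow g x t - g x|
      ≤ ε + L * ∫ y in (-1 : ℝ)..1, heatGamma x y t * (cosMode 1 y - cosMode 1 x) ^ 2 := by
  have hG : ContinuousOn (fun y => heatGamma x y t) (Icc (-1) 1) :=
    (continuous_heatGamma_right x ht).continuousOn
  have hD : ContinuousOn (fun y => (cosMode 1 y - cosMode 1 x) ^ 2) (Icc (-1) 1) :=
    (((continuous_cosMode 1).sub continuous_const).pow 2).continuousOn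
  have hint {h : ℝ → ℝ} (hh : ContinuousOn h (Icc (-1) 1)) :
      IntervalIntegrable (fun y => heatGamma x y t * h y) volume (-1) 1 :=
    (hG.mul hh).intervalIntegrable_of_Icc (by norm_num)
  have hdiff : heatFlow g x t - g x = ∫ y in (-1 : ℝ)..1, heatGamma x y t * (g y - g x) := by
    simp only [mul_sub]
    rw [intervalIntegral.integral_sub (hint hg) (hint continuousOn_const),
      intervalIntegral.integral_mul_const, integral_heatGamma x ht, one_mul, heatFlow]
  have hmajor : ∫ y in (-1 : ℝ)..1, heatGamma x y t * (ε + L * (cosMode 1 y - cosMode 1 x) ^ 2)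
      = ε + L * ∫ y in (-1 : ℝ)..1, heatGamma x y t * (cosMode 1 y - cosMode 1 x) ^ 2 := by
    simp only [mul_add, mul_left_comm _ L]
    rw [intervalIntegral.integral_add (hint continuousOn_const)
      ((hint hD).const_mul L), intervalIntegral.integral_mul_const,
      intervalIntegral.integral_const_mul, integral_heatGamma x ht, one_mul]
  rw [hdiff, ← hmajor, ← norm_eq_abs]
  refine intervalIntegral.norm_integral_le_of_norm_le (by norm_num) (.of_forall fun y hy => ?_)
    (hint (continuousOn_const.add (continuousOn_const.mul hD)))
  rw [norm_mul, norm_of_nonneg (heatGamma_nonneg x y t)]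
  exact mul_le_mul_of_nonneg_left (hL y (Ioc_subset_Icc_self hy)) (heatGamma_nonneg x y t)

/-- Korovkin's argument: the heat kernel is positive and acts explicitly on the modes `0`, `1`, `2`,
which span the square of `cosMode 1 y - cosMode 1 x`. -/
theorem tendstoUniformlyOn_heatFlow {g : ℝ → ℝ} (hg : ContinuousOn g (Icc (-1) 1)) :
    TendstoUniformlyOn (fun t x => heatFlow g x t) g (𝓝[>] 0) (Icc (-1) 1) := by
  rw [Metric.tendstoUniformlyOn_iff]
  intro ε hε
  obtain ⟨L, hL0, hL⟩ := exists_le_add_mul_of_isCompact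
    (isCompact_Icc (a := (-1 : ℝ)) (b := 1) |>.prod (isCompact_Icc (a := (-1 : ℝ)) (b := 1)))
    (F := fun q => |g q.2 - g q.1|) (D := fun q => (cosMode 1 q.2 - cosMode 1 q.1) ^ 2)
    ((hg.comp continuousOn_snd fun q hq => hq.2).sub
      (hg.comp continuousOn_fst fun q hq => hq.1)).abs
    (by have := continuous_cosMode 1; fun_prop) (fun q _ => sq_nonneg _)
    (fun q hq h => by
      rw [sq_eq_zero_iff, sub_eq_zero] at h
      simp [injOn_cosMode_one hq.2 hq.1 h]) (half_pos hε)
  have hlim : Tendsto (fun t => ε / 2 + L * ((1 - modeDecay t 2) / 2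
      + |1 + modeDecay t 2 - 2 * modeDecay t 1|)) (𝓝[>] 0) (𝓝 (ε / 2)) := by
    have h1 := tendsto_modeDecay_zero 1
    have h2 := tendsto_modeDecay_zero 2
    convert! (((h2.const_sub 1).div_const 2).add
      ((h2.const_add 1).sub (h1.const_mul 2)).abs).const_mul L |>.const_add (ε / 2) using 2
    norm_num
  filter_upwards [hlim.eventually_lt_const (half_lt_self hε), self_mem_nhdsWithin]
    with t hlt ht x hx
  rw [dist_comm, Real.dist_eq]
  refine ((abs_heatFlow_sub_le hg ht fun y hy => hL (x, y) ⟨hx, hy⟩).trans ?_).trans_lt hlt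
  rw [integral_heatGamma_mul_sq_cosMode_sub x ht]
  gcongr
  refine (le_abs_self _).trans ?_
  rw [abs_mul, abs_pow]
  exact mul_le_of_le_one_left (abs_nonneg _) (pow_le_one₀ (abs_nonneg _) (abs_cosMode_le_one 1 x))

lemma eventually_forall_lt_heatFlow {g : ℝ → ℝ} (hg : ContinuousOn g (Icc (-1) 1)) {c d : ℝ}
    (hsub : Icc c d ⊆ Icc (-1) 1) (hpos : ∀ x ∈ Icc c d, 0 < g x) :
    ∃ m > 0, ∀ᶠ t in 𝓝[>] 0, ∀ x ∈ Icc c d, m < heatFlow g x t := by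
  obtain ⟨m, hm, hmg⟩ := isCompact_Icc.exists_forall_le' (hg.mono hsub) hpos
  refine ⟨m / 2, half_pos hm, ?_⟩
  filter_upwards [Metric.tendstoUniformlyOn_iff.mp ((tendstoUniformlyOn_heatFlow hg).mono hsub)
    (m / 2) (half_pos hm)] with t ht x hx
  have h := ht x hx
  rw [Real.dist_eq] at h
  linarith [hmg x hx, (abs_lt.mp h).2]

/-! ### The dipole kernel -/

lemma norm_complex_cos_le_exp_norm (z : ℂ) : ‖Complex.cos z‖ ≤ exp ‖z‖ := by
  have h1 : ‖Complex.exp (z * Complex.I)‖ ≤ exp ‖z‖ := by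
    simpa using Complex.norm_exp_le_exp_norm (z * Complex.I)
  have h2 : ‖Complex.exp (-z * Complex.I)‖ ≤ exp ‖z‖ := by
    simpa using Complex.norm_exp_le_exp_norm (-z * Complex.I)
  rw [Complex.cos, norm_div, Complex.norm_ofNat]
  linarith [norm_add_le (Complex.exp (z * Complex.I)) (Complex.exp (-z * Complex.I))]

theorem analyticOnNhd_tsum_mul_cosMode {a : ℤ → ℝ}
    (ha : ∀ R, Summable fun n => |a n| * exp (R * |(n : ℝ)|)) :
    AnalyticOnNhd ℝ (fun x => ∑' n, a n * cosMode n x) univ := by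
  intro x _
  set U := Metric.ball (0 : ℂ) (|x| + 1)
  have hx : (x : ℂ) ∈ U := by simp [U]
  have hdiff : DifferentiableOn ℂ
      (fun z : ℂ => ∑' n : ℤ, (a n : ℂ) * Complex.cos (n * (π * (z + 1) / 2))) U := by
    refine Complex.differentiableOn_tsum_of_summable_norm (ha (π * (|x| + 2) / 2)) (fun n => ?_)
      Metric.isOpen_ball fun n z hz => ?_
    · exact Differentiable.differentiableOn (by fun_prop)
    · rw [norm_mul, Complex.norm_real, norm_eq_abs]
      gcongr
      refine (norm_complex_cos_le_exp_norm _).trans (exp_le_exp.mpr ?_)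
      have hz1 : ‖z + 1‖ ≤ |x| + 2 := by
        have := norm_add_le z 1
        rw [norm_one] at this
        linarith [mem_ball_zero_iff.mp hz]
      rw [norm_mul, norm_div, norm_mul, Complex.norm_real, Complex.norm_intCast,
        Complex.norm_ofNat, norm_of_nonneg pi_pos.le, mul_comm]
      gcongr
  have hre := (hdiff.analyticAt (Metric.isOpen_ball.mem_nhds hx)).re_ofReal
  convert! hre using 2 with y
  have hterm (n : ℤ) : (a n : ℂ) * Complex.cos (n * (π * ((y : ℂ) + 1) / 2))
      = ((a n * cosMode n y : ℝ) : ℂ) := by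
    simp [cosMode]
  simp only [hterm, ← Complex.ofReal_tsum, Complex.ofReal_re]

theorem add_neg_eq_zero_of_tsum_mul_cosMode_eq_zero {a : ℤ → ℝ}
    (ha : ∀ R, Summable fun n => |a n| * exp (R * |(n : ℝ)|)) {c d : ℝ} (hcd : c < d)
    (h : ∀ x ∈ Ioo c d, ∑' n, a n * cosMode n x = 0) (m : ℤ) : a m + a (-m) = 0 := by
  obtain ⟨x₀, hx₀⟩ := nonempty_Ioo.mpr hcd
  have hzero := (analyticOnNhd_tsum_mul_cosMode ha).eqOn_zero_of_preconnected_of_eventuallyEq_zero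
    isPreconnected_univ (mem_univ x₀) (eventually_of_mem (isOpen_Ioo.mem_nhds hx₀) h)
  have hsum : Summable a := .of_abs (by simpa only [zero_mul, exp_zero, mul_one] using ha 0)
  rw [← integral_tsum_mul_cosMode hsum m]
  have hpt (x : ℝ) : ∑' n, a n * cosMode n x = 0 := hzero (mem_univ x)
  simp only [hpt, zero_mul, intervalIntegral.integral_zero]

/-- The Dirichlet quotient `sin (nθ) / sin θ` as a polynomial in `u = cos θ`, which gives it a value
at `u = ±1`: it is the Chebyshev polynomial `U_{n-1}`. -/
noncomputable def sinQuotient (n : ℤ) (u : ℝ) : ℝ :=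
  (Polynomial.Chebyshev.U ℝ (n - 1)).eval u

lemma sinQuotient_cos_mul_sin (n : ℤ) (θ : ℝ) : sinQuotient n (cos θ) * sin θ = sin (n * θ) := by
  rw [sinQuotient, Polynomial.Chebyshev.U_real_cos]
  push_cast
  ring_nf

lemma sinQuotient_neg (n : ℤ) (u : ℝ) : sinQuotient (-n) u = -sinQuotient n u := by
  rw [sinQuotient, Polynomial.Chebyshev.U_neg_sub_one, Polynomial.eval_neg, sinQuotient]

lemma sinQuotient_one (u : ℝ) : sinQuotient 1 u = 1 := by simp [sinQuotient]

lemma continuous_sinQuotient (n : ℤ) : Continuous (sinQuotient n) :=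
  (Polynomial.Chebyshev.U ℝ (n - 1)).continuous

lemma abs_sinQuotient_natCast_le (n : ℕ) {u : ℝ} (hu : |u| ≤ 1) : |sinQuotient n u| ≤ n := by
  induction n with
  | zero => simp [sinQuotient]
  | succ n ih =>
    have hrec : sinQuotient (n + 1 : ℕ) u
        = u * sinQuotient n u + (Polynomial.Chebyshev.T ℝ n).eval u := by
      have h := congrArg (Polynomial.eval u) (Polynomial.Chebyshev.U_eq_X_mul_U_add_T ℝ (n - 1))
      simpa [sinQuotient] using h
    rw [hrec]
    calc |u * sinQuotient n u + (Polynomial.Chebyshev.T ℝ n).eval u|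
        ≤ |u| * |sinQuotient n u| + |(Polynomial.Chebyshev.T ℝ n).eval u| := by
          rw [← abs_mul]
          exact abs_add_le _ _
      _ ≤ 1 * n + 1 := by
          gcongr
          exact Polynomial.Chebyshev.abs_eval_T_real_le_one n hu
      _ = ((n + 1 : ℕ) : ℝ) := by push_cast; ring

lemma abs_sinQuotient_le (n : ℤ) {u : ℝ} (hu : |u| ≤ 1) : |sinQuotient n u| ≤ |(n : ℝ)| := by
  obtain ⟨k, rfl | rfl⟩ := n.eq_nat_or_neg
  · simpa using abs_sinQuotient_natCast_le k hu
  · simpa [sinQuotient_neg] using abs_sinQuotient_natCast_le k hu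

/-- The temperature at `x`, after time `τ`, due to a unit source at `p - b` and a unit sink at
`p + b`. -/
noncomputable def dipoleKernel (p b τ x : ℝ) : ℝ :=
  heatGamma x (p - b) τ - heatGamma x (p + b) τ

/-- The factor of the dipole kernel that vanishes when source and sink cancel, that is, when `b`
tends to `0` or `p` to a Neumann boundary `±1`. -/
noncomputable def dipoleWeight (p b : ℝ) : ℝ :=
  sin (π * (p + 1) / 2) * sin (π * b / 2)

/-- The cosine coefficients of `dipoleProfile u v τ`. -/
noncomputable def dipoleCoeff (u v τ : ℝ) (n : ℤ) : ℝ :=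
  modeDecay τ n * (sinQuotient n u * sinQuotient n v)

/-- The dipole kernel divided by its weight. Source and sink enter through `u = cos (π(p + 1)/2)`
and `v = cos (πb/2)`, so that the quotient extends to the compact parameter square `[-1, 1]²`. -/
noncomputable def dipoleProfile (u v τ x : ℝ) : ℝ :=
  ∑' n, dipoleCoeff u v τ n * cosMode n x

lemma dipoleKernel_eq_dipoleWeight_mul (p b x : ℝ) {τ : ℝ} (hτ : 0 < τ) :
    dipoleKernel p b τ x
      = dipoleWeight p b * dipoleProfile (cos (π * (p + 1) / 2)) (cos (π * b / 2)) τ x := by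
  rw [dipoleProfile, ← tsum_mul_left]
  refine (((hasSum_heatGamma x (p - b) hτ).sub (hasSum_heatGamma x (p + b) hτ)).congr_fun
    fun n => ?_).tsum_eq.symm
  have hsub : n * (π * (p - b + 1) / 2) = n * (π * (p + 1) / 2) - n * (π * b / 2) := by ring
  have hadd : n * (π * (p + b + 1) / 2) = n * (π * (p + 1) / 2) + n * (π * b / 2) := by ring
  simp only [dipoleWeight, dipoleCoeff, cosMode, hsub, hadd, cos_sub, cos_add,
    ← sinQuotient_cos_mul_sin]
  ring

lemma abs_dipoleCoeff_le {u v τ₀ τ : ℝ} (hu : |u| ≤ 1) (hv : |v| ≤ 1) (hτ : τ₀ ≤ τ) (n : ℤ) :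
    |dipoleCoeff u v τ n| ≤ |(n : ℝ)| ^ 2 * modeDecay τ₀ n := by
  rw [dipoleCoeff, abs_mul, abs_mul, abs_of_pos (modeDecay_pos τ n), mul_comm, sq]
  exact mul_le_mul (mul_le_mul (abs_sinQuotient_le n hu) (abs_sinQuotient_le n hv)
    (abs_nonneg _) (abs_nonneg _)) (modeDecay_anti n hτ) (modeDecay_pos τ n).le (by positivity)

lemma summable_dipoleCoeff {u v τ : ℝ} (hu : |u| ≤ 1) (hv : |v| ≤ 1) (hτ : 0 < τ) :
    Summable (dipoleCoeff u v τ) :=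
  .of_norm_bounded (summable_abs_pow_mul_modeDecay 2 hτ) fun n => abs_dipoleCoeff_le hu hv le_rfl n

lemma abs_dipoleProfile_le {u v τ₀ τ : ℝ} (hu : |u| ≤ 1) (hv : |v| ≤ 1) (hτ₀ : 0 < τ₀)
    (hτ : τ₀ ≤ τ) (x : ℝ) :
    |dipoleProfile u v τ x| ≤ ∑' n : ℤ, |(n : ℝ)| ^ 2 * modeDecay τ₀ n :=
  (norm_eq_abs _).symm.trans_le <| tsum_of_norm_bounded
    (summable_abs_pow_mul_modeDecay 2 hτ₀).hasSum fun n =>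
      (abs_mul_cosMode_le _ n x).trans (abs_dipoleCoeff_le hu hv hτ n)

lemma continuousOn_dipoleProfile_parameters (x : ℝ) {τ₀ : ℝ} (hτ₀ : 0 < τ₀) :
    ContinuousOn (fun q : ℝ × ℝ × ℝ => dipoleProfile q.1 q.2.1 q.2.2 x)
      (Icc (-1) 1 ×ˢ Icc (-1) 1 ×ˢ Ici τ₀) := by
  refine continuousOn_tsum (fun n => Continuous.continuousOn ?_)
    (summable_abs_pow_mul_modeDecay 2 hτ₀) fun n q hq => ?_
  · have := continuous_sinQuotient n
    unfold dipoleCoeff modeDecay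
    fun_prop
  · exact (abs_mul_cosMode_le _ n x).trans
      (abs_dipoleCoeff_le (abs_le.mpr hq.1) (abs_le.mpr hq.2.1) hq.2.2 n)

theorem exists_dipoleProfile_ne_zero {u v τ : ℝ} (hu : |u| ≤ 1) (hv : |v| ≤ 1) (hτ : 0 < τ)
    {c d : ℝ} (hcd : c < d) : ∃ x ∈ Ioo c d, dipoleProfile u v τ x ≠ 0 := by
  by_contra! hzero
  have hsum (R : ℝ) : Summable fun n => |dipoleCoeff u v τ n| * exp (R * |(n : ℝ)|) := by
    refine .of_nonneg_of_le (fun n => by positivity) (fun n => ?_)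
      (summable_abs_pow_mul_exp_neg_sq 2 (c := π ^ 2 * τ / 4) (by positivity) R)
    rw [exp_add, ← mul_assoc]
    gcongr
    exact abs_dipoleCoeff_le hu hv le_rfl n
  have h := add_neg_eq_zero_of_tsum_mul_cosMode_eq_zero hsum hcd hzero 1
  rw [dipoleCoeff, dipoleCoeff, modeDecay_neg, sinQuotient_neg, sinQuotient_neg,
    sinQuotient_one, sinQuotient_one] at h
  linarith [modeDecay_pos τ 1]

/-! ### Integrability of the dipole strength -/

lemma exists_finset_forall_exists_ne_zero {X ι : Type*} [TopologicalSpace X] {K : Set X}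
    (hK : IsCompact K) {Φ : ι → X → ℝ} (hΦ : ∀ i, ContinuousOn (Φ i) K)
    (hne : ∀ k ∈ K, ∃ i, Φ i k ≠ 0) : ∃ F : Finset ι, ∀ k ∈ K, ∃ i ∈ F, Φ i k ≠ 0 := by
  classical
  refine hK.induction_on (p := fun S => ∃ F : Finset ι, ∀ k ∈ S, ∃ i ∈ F, Φ i k ≠ 0)
    ⟨∅, fun k hk => hk.elim⟩ (fun S S' hSS' ⟨F, hF⟩ => ⟨F, fun k hk => hF k (hSS' hk)⟩)
    (fun S S' ⟨F, hF⟩ ⟨F', hF'⟩ => ⟨F ∪ F', fun k hk => ?_⟩) fun k hk => ?_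
  · rcases hk with hk | hk
    · obtain ⟨i, hi, hne⟩ := hF k hk
      exact ⟨i, Finset.mem_union_left _ hi, hne⟩
    · obtain ⟨i, hi, hne⟩ := hF' k hk
      exact ⟨i, Finset.mem_union_right _ hi, hne⟩
  · obtain ⟨i, hi⟩ := hne k hk
    exact ⟨_, (hΦ i k hk).eventually_ne hi, {i}, fun x hx => ⟨i, Finset.mem_singleton_self i, hx⟩⟩

theorem integrable_of_forall_integrable_mul {X ι S : Type*} [TopologicalSpace X]
    [MeasurableSpace S] {μ : Measure S} {K : Set X} (hK : IsCompact K) {Φ : ι → X → ℝ}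
    (hΦ : ∀ i, ContinuousOn (Φ i) K) (hne : ∀ k ∈ K, ∃ i, Φ i k ≠ 0) {q : S → X}
    (hq : ∀ᵐ s ∂μ, q s ∈ K) {h : S → ℝ} (hh : AEStronglyMeasurable h μ)
    (hint : ∀ i, Integrable (fun s => h s * Φ i (q s)) μ) : Integrable h μ := by
  obtain ⟨F, hF⟩ := exists_finset_forall_exists_ne_zero hK hΦ hne
  obtain ⟨m, hm, hmF⟩ := hK.exists_forall_le' (f := fun k => ∑ i ∈ F, |Φ i k|) (a := 0)
    (continuousOn_finsetSum F fun i _ => (hΦ i).abs) fun k hk => by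
      obtain ⟨i, hi, hne⟩ := hF k hk
      exact Finset.sum_pos' (fun _ _ => abs_nonneg _) ⟨i, hi, abs_pos.mpr hne⟩
  refine ((integrable_finsetSum F fun i _ => (hint i).norm).const_mul m⁻¹).mono' hh ?_
  filter_upwards [hq] with s hs
  simp only [norm_mul, ← Finset.mul_sum, norm_eq_abs]
  rw [mul_left_comm, inv_mul_eq_div]
  exact le_mul_of_one_le_right (abs_nonneg _) ((one_le_div hm).mpr (hmF _ hs))

lemma abs_dipoleWeight_le_one (p b : ℝ) : |dipoleWeight p b| ≤ 1 := by
  rw [dipoleWeight, abs_mul]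
  exact mul_le_one₀ (abs_sin_le_one _) (abs_nonneg _) (abs_sin_le_one _)

/-- The flux `lam` times the weight of the dipole `p ∓ b` that carries it, the quantity on which all
small-time estimates of the source term rest. -/
noncomputable def dipoleStrength (p b lam : ℝ → ℝ) (s : ℝ) : ℝ :=
  dipoleWeight (p s) (b s) * lam s

lemma dipoleKernel_mul_eq_dipoleStrength_mul (p b lam : ℝ → ℝ) (x : ℝ) {s t : ℝ} (hst : s < t) :
    dipoleKernel (p s) (b s) (t - s) x * lam s = dipoleStrength p b lam s
      * dipoleProfile (cos (π * (p s + 1) / 2)) (cos (π * b s / 2)) (t - s) x := by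
  rw [dipoleKernel_eq_dipoleWeight_mul _ _ _ (sub_pos.mpr hst), dipoleStrength]
  ring

section

variable {T : ℝ} {p b lam : ℝ → ℝ}

lemma aestronglyMeasurable_dipoleStrength (hp : ContinuousOn p (Ioc 0 T))
    (hb : ContinuousOn b (Ioc 0 T)) (hlam : LocallyIntegrableOn lam (Ioc 0 T)) :
    AEStronglyMeasurable (dipoleStrength p b lam) (volume.restrict (Ioc 0 T)) := by
  have hW : ContinuousOn (fun s => dipoleWeight (p s) (b s)) (Ioc 0 T) := by
    unfold dipoleWeight
    fun_prop
  exact (hW.aestronglyMeasurable measurableSet_Ioc).mul hlam.aestronglyMeasurable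

lemma integrableOn_Icc_of_locallyIntegrableOn_Ioc (hlam : LocallyIntegrableOn lam (Ioc 0 T))
    {τ : ℝ} (hτ : 0 < τ) : IntegrableOn lam (Icc τ T) :=
  hlam.integrableOn_compact_subset (fun _ hs => ⟨hτ.trans_le hs.1, hs.2⟩) isCompact_Icc

theorem integrableOn_dipoleStrength (hp : ContinuousOn p (Ioc 0 T)) (hb : ContinuousOn b (Ioc 0 T))
    (hlam : LocallyIntegrableOn lam (Ioc 0 T)) {t : ℝ} (ht : t ∈ Ioc 0 T) {c d : ℝ} (hcd : c < d)
    (hint : ∀ x ∈ Ioo c d,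
      IntegrableOn (fun s => dipoleKernel (p s) (b s) (t - s) x * lam s) (Ioc 0 t)) :
    IntegrableOn (dipoleStrength p b lam) (Ioc 0 T) := by
  have hmeas := aestronglyMeasurable_dipoleStrength hp hb hlam
  have hearly : IntegrableOn (dipoleStrength p b lam) (Ioc 0 (t / 2)) := by
    have hsub : Ioc 0 (t / 2) ⊆ Ioc 0 t := Ioc_subset_Ioc_right (half_le_self ht.1.le)
    refine integrable_of_forall_integrable_mul
      (K := Icc (-1) 1 ×ˢ Icc (-1) 1 ×ˢ Icc (t / 2) t)
      (isCompact_Icc.prod (isCompact_Icc.prod isCompact_Icc))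
      (Φ := fun (x : Ioo c d) q => dipoleProfile q.1 q.2.1 q.2.2 x)
      (q := fun s => (cos (π * (p s + 1) / 2), cos (π * b s / 2), t - s))
      (fun x => (continuousOn_dipoleProfile_parameters x (half_pos ht.1)).mono
        (prod_mono_right (prod_mono_right Icc_subset_Ici_self))) (fun q hq => ?_) ?_
      (hmeas.mono_set (hsub.trans (Ioc_subset_Ioc_right ht.2))) fun x => ?_
    · obtain ⟨x, hx, hne⟩ := exists_dipoleProfile_ne_zero (abs_le.mpr hq.1) (abs_le.mpr hq.2.1)
        ((half_pos ht.1).trans_le hq.2.2.1) hcd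
      exact ⟨⟨x, hx⟩, hne⟩
    · filter_upwards [ae_restrict_mem measurableSet_Ioc] with s hs
      exact ⟨cos_mem_Icc _, cos_mem_Icc _, by linarith [hs.2], by linarith [hs.1]⟩
    · refine ((hint x x.2).mono_set hsub).congr_fun (fun s hs => ?_) measurableSet_Ioc
      exact dipoleKernel_mul_eq_dipoleStrength_mul p b lam x (by linarith [hs.2, ht.1])
  have hlate : IntegrableOn (dipoleStrength p b lam) (Ioc (t / 2) T) :=
    Integrable.mono ((integrableOn_Icc_of_locallyIntegrableOn_Ioc hlam (half_pos ht.1)).mono_set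
      Ioc_subset_Icc_self) (hmeas.mono_set (Ioc_subset_Ioc_left (half_pos ht.1).le))
      (.of_forall fun s => by
        rw [dipoleStrength, norm_mul]
        exact mul_le_of_le_one_left (norm_nonneg _) (abs_dipoleWeight_le_one _ _))
  rw [← Ioc_union_Ioc_eq_Ioc (half_pos ht.1).le ((half_le_self ht.1.le).trans ht.2)]
  exact hearly.union hlate

end

open scoped FourierTransform ContDiff in
lemma exists_pow_mul_abs_integral_mul_cosMode_le {φ : ℝ → ℝ} (hφ : ContDiff ℝ ∞ φ)
    (hsupp : HasCompactSupport φ) (k : ℕ) :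
    ∃ C, ∀ n : ℤ, |(n : ℝ)| ^ k * |∫ x, φ x * cosMode n x| ≤ C := by
  have hsuppC : HasCompactSupport fun x => (φ x : ℂ) := hsupp.comp_left Complex.ofReal_zero
  set ψ := hsuppC.toSchwartzMap (Complex.ofRealCLM.contDiff.comp hφ)
  obtain ⟨C, -, hC⟩ := SchwartzMap.decay (𝓕 ψ) k 0
  refine ⟨4 ^ k * C, fun n => ?_⟩
  have hmode : ∫ x, φ x * cosMode n x
      = (∫ x, Complex.exp (↑(n * (π / 2)) * Complex.I)
          * (Complex.exp (↑(-2 * π * x * -(n / 4)) * Complex.I) * φ x)).re := by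
    have hexp : Continuous fun x : ℝ => Complex.exp (↑(-2 * π * x * -(n / 4)) * Complex.I) := by
      fun_prop
    have hint : Integrable fun x : ℝ => Complex.exp (↑(n * (π / 2)) * Complex.I)
          * (Complex.exp (↑(-2 * π * x * -(n / 4)) * Complex.I) * φ x) :=
      ((hexp.mul (Complex.continuous_ofReal.comp hφ.continuous)).integrable_of_hasCompactSupport
        hsuppC.mul_left).const_mul _
    rw [← RCLike.re_eq_complex_re, ← integral_re hint]
    congr! 2 with x
    rw [← mul_assoc, ← Complex.exp_add, ← add_mul, ← Complex.ofReal_add, RCLike.re_eq_complex_re,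
      Complex.re_mul_ofReal, Complex.exp_ofReal_mul_I_re, cosMode, mul_comm]
    ring_nf
  have hle : |∫ x, φ x * cosMode n x| ≤ ‖𝓕 ψ (-(n / 4))‖ := by
    rw [hmode, integral_const_mul]
    refine (Complex.abs_re_le_norm _).trans_eq ?_
    rw [norm_mul, Complex.norm_exp_ofReal_mul_I, one_mul, SchwartzMap.fourier_coe,
      Real.fourier_real_eq_integral_exp_smul]
    rfl
  specialize hC (-(n / 4))
  rw [norm_iteratedFDeriv_zero] at hC
  calc |(n : ℝ)| ^ k * |∫ x, φ x * cosMode n x|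
      ≤ |(n : ℝ)| ^ k * ‖𝓕 ψ (-(n / 4))‖ := by gcongr
    _ = 4 ^ k * (‖-(n / 4 : ℝ)‖ ^ k * ‖𝓕 ψ (-(n / 4))‖) := by
      rw [norm_neg, norm_eq_abs, abs_div, abs_of_pos (four_pos : (0 : ℝ) < 4), div_pow]
      field_simp
    _ ≤ 4 ^ k * C := by gcongr

theorem abs_integral_mul_dipoleProfile_le {φ : ℝ → ℝ} (hφ : Integrable φ) {C : ℝ}
    (hC : ∀ n : ℤ, |(n : ℝ)| ^ 4 * |∫ x, φ x * cosMode n x| ≤ C) {u v τ : ℝ}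
    (hu : |u| ≤ 1) (hv : |v| ≤ 1) (hτ : 0 < τ) :
    |∫ x, φ x * dipoleProfile u v τ x| ≤ C * ∑' n : ℤ, 1 / (n : ℝ) ^ 2 := by
  have hint (n : ℤ) : Integrable fun x => φ x * (dipoleCoeff u v τ n * cosMode n x) :=
    hφ.mul_bdd (c := |dipoleCoeff u v τ n|)
      (continuous_const.mul (continuous_cosMode n)).aestronglyMeasurable
      (.of_forall fun x => abs_mul_cosMode_le _ n x)
  have hnorm : Summable fun n => ∫ x, ‖φ x * (dipoleCoeff u v τ n * cosMode n x)‖ := by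
    refine .of_nonneg_of_le (fun n => integral_nonneg fun _ => norm_nonneg _) (fun n => ?_)
      ((summable_dipoleCoeff hu hv hτ).abs.mul_left (∫ x, ‖φ x‖))
    rw [← integral_mul_const]
    refine integral_mono (hint n).norm (hφ.norm.mul_const _) fun x => ?_
    simp only [norm_mul (φ x)]
    exact mul_le_mul_of_nonneg_left (abs_mul_cosMode_le _ n x) (norm_nonneg _)
  have hsum : HasSum (fun n => dipoleCoeff u v τ n * ∫ x, φ x * cosMode n x)
      (∫ x, φ x * dipoleProfile u v τ x) := by
    convert! hasSum_integral_of_summable_integral_norm hint hnorm using 2 with n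
    · rw [← integral_const_mul]
      simp only [mul_left_comm]
    · simp only [tsum_mul_left, dipoleProfile]
  have hterm (n : ℤ) : ‖dipoleCoeff u v τ n * ∫ x, φ x * cosMode n x‖ ≤ C * (1 / (n : ℝ) ^ 2) := by
    have hcoeff : |dipoleCoeff u v τ n| ≤ |(n : ℝ)| ^ 2 := by
      simpa only [modeDecay, mul_zero, zero_div, zero_mul, neg_zero, exp_zero, mul_one]
        using abs_dipoleCoeff_le hu hv hτ.le n
    rcases eq_or_ne n 0 with rfl | hn
    · simp_all
    · rw [mul_one_div, le_div_iff₀ (by positivity), norm_mul, norm_eq_abs, norm_eq_abs]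
      calc |dipoleCoeff u v τ n| * |∫ x, φ x * cosMode n x| * (n : ℝ) ^ 2
          ≤ |(n : ℝ)| ^ 2 * |∫ x, φ x * cosMode n x| * (n : ℝ) ^ 2 := by gcongr
        _ = |(n : ℝ)| ^ 4 * |∫ x, φ x * cosMode n x| := by rw [← sq_abs (n : ℝ)]; ring
        _ ≤ C := hC n
  rw [← hsum.tsum_eq, ← tsum_mul_left]
  exact tsum_of_norm_bounded
    ((Real.summable_one_div_int_pow.mpr one_lt_two).mul_left C).hasSum hterm

/-! ### The source term -/

lemma continuous_dipoleKernel (p b : ℝ) {τ : ℝ} (hτ : 0 < τ) : Continuous (dipoleKernel p b τ) := by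
  unfold dipoleKernel
  simp only [heatGamma_comm _ (p - b) hτ, heatGamma_comm _ (p + b) hτ]
  exact (continuous_heatGamma_right _ hτ).sub (continuous_heatGamma_right _ hτ)

lemma integral_abs_dipoleKernel_le (p b : ℝ) {τ : ℝ} (hτ : 0 < τ) :
    ∫ x in Ioc (-1) 1, |dipoleKernel p b τ x| ≤ 2 := by
  have hone (y : ℝ) : IntegrableOn (fun x => heatGamma x y τ) (Ioc (-1) 1) ∧
      ∫ x in Ioc (-1) 1, heatGamma x y τ = 1 := by
    simp only [heatGamma_comm _ y hτ]
    rw [← intervalIntegral.integral_of_le (by norm_num), integral_heatGamma y hτ]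
    exact ⟨(continuous_heatGamma_right y hτ).integrableOn_Ioc, rfl⟩
  calc ∫ x in Ioc (-1) 1, |dipoleKernel p b τ x|
      ≤ ∫ x in Ioc (-1) 1, (heatGamma x (p - b) τ + heatGamma x (p + b) τ) := by
        refine setIntegral_mono (continuous_dipoleKernel p b hτ).abs.integrableOn_Ioc
          ((hone _).1.add (hone _).1) fun x => (abs_sub _ _).trans_eq ?_
        rw [abs_of_nonneg (heatGamma_nonneg _ _ _), abs_of_nonneg (heatGamma_nonneg _ _ _)]
    _ = 2 := by
      rw [integral_add (hone _).1 (hone _).1, (hone _).2, (hone _).2, one_add_one_eq_two]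

lemma integral_abs_dipoleKernel_le_mul_abs_dipoleWeight (p b : ℝ) {τ₀ τ : ℝ} (hτ₀ : 0 < τ₀)
    (hτ : τ₀ ≤ τ) : ∫ x in Ioc (-1) 1, |dipoleKernel p b τ x|
      ≤ 2 * (∑' n : ℤ, |(n : ℝ)| ^ 2 * modeDecay τ₀ n) * |dipoleWeight p b| := by
  have hτpos := hτ₀.trans_le hτ
  calc ∫ x in Ioc (-1) 1, |dipoleKernel p b τ x|
      ≤ ∫ x in Ioc (-1 : ℝ) 1, |dipoleWeight p b| * ∑' n : ℤ, |(n : ℝ)| ^ 2 * modeDecay τ₀ n := by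
        refine setIntegral_mono (continuous_dipoleKernel p b hτpos).abs.integrableOn_Ioc
          (integrableOn_const (by simp)) fun x => ?_
        simp only [dipoleKernel_eq_dipoleWeight_mul p b x hτpos, abs_mul]
        exact mul_le_mul_of_nonneg_left (abs_dipoleProfile_le (abs_cos_le_one _)
          (abs_cos_le_one _) hτ₀ hτ x) (abs_nonneg _)
    _ = _ := by
      rw [setIntegral_const, volume_real_Ioc_of_le (by norm_num), smul_eq_mul]
      ring

/-- The Duhamel contribution of dipoles at `p s ∓ b s` with amplitude `lam s`, `0 < s < t`. -/
noncomputable def sourceTerm (p b lam : ℝ → ℝ) (x t : ℝ) : ℝ :=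
  ∫ s in (0 : ℝ)..t, dipoleKernel (p s) (b s) (t - s) x * lam s

lemma sourceTerm_eq_integral_Ioo (p b lam : ℝ → ℝ) (x : ℝ) {t : ℝ} (ht : 0 ≤ t) :
    sourceTerm p b lam x t = ∫ s in Ioo 0 t, dipoleKernel (p s) (b s) (t - s) x * lam s := by
  rw [sourceTerm, intervalIntegral.integral_of_le ht, integral_Ioc_eq_integral_Ioo]

section

variable {T : ℝ} {p b lam : ℝ → ℝ}

lemma aestronglyMeasurable_dipoleKernel_mul {S : Set ℝ} (hS : MeasurableSet S)
    (hp : ContinuousOn p S) (hb : ContinuousOn b S)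
    (hlam : AEStronglyMeasurable lam (volume.restrict S)) (t : ℝ) (μ : Measure ℝ) [SFinite μ] :
    AEStronglyMeasurable
      (fun q : ℝ × ℝ => dipoleKernel (p q.1) (b q.1) (t - q.1) q.2 * lam q.1)
      ((volume.restrict S).prod μ) := by
  have hp' : AEMeasurable (fun q : ℝ × ℝ => p q.1) ((volume.restrict S).prod μ) :=
    (hp.aemeasurable hS).comp_fst
  have hb' : AEMeasurable (fun q : ℝ × ℝ => b q.1) ((volume.restrict S).prod μ) :=
    (hb.aemeasurable hS).comp_fst
  have hgamma {y : ℝ × ℝ → ℝ} (hy : AEMeasurable y ((volume.restrict S).prod μ)) :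
      AEMeasurable (fun q : ℝ × ℝ => heatGamma q.2 (y q) (t - q.1)) ((volume.restrict S).prod μ) :=
    measurable_heatGamma.comp_aemeasurable
      (measurable_snd.aemeasurable.prodMk (hy.prodMk (measurable_fst.const_sub t).aemeasurable))
  exact ((hgamma (hp'.sub hb')).sub (hgamma (hp'.add hb'))).aestronglyMeasurable.mul hlam.comp_fst

theorem integrable_dipoleKernel_mul (hp : ContinuousOn p (Ioc 0 T)) (hb : ContinuousOn b (Ioc 0 T))
    (hlam : LocallyIntegrableOn lam (Ioc 0 T))
    (hstrength : IntegrableOn (dipoleStrength p b lam) (Ioc 0 T)) {t : ℝ} (ht : t ∈ Ioc 0 T) :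
    Integrable (fun q : ℝ × ℝ => dipoleKernel (p q.1) (b q.1) (t - q.1) q.2 * lam q.1)
      ((volume.restrict (Ioo 0 t)).prod (volume.restrict (Ioc (-1) 1))) := by
  have hsub : Ioo 0 t ⊆ Ioc 0 T := Ioo_subset_Ioc_self.trans (Ioc_subset_Ioc_right ht.2)
  have hmeas := aestronglyMeasurable_dipoleKernel_mul measurableSet_Ioo (hp.mono hsub)
    (hb.mono hsub) (hlam.aestronglyMeasurable.mono_set hsub) t (volume.restrict (Ioc (-1) 1))
  set M := ∑' n : ℤ, |(n : ℝ)| ^ 2 * modeDecay (t / 2) n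
  have hM : 0 ≤ M := tsum_nonneg fun n => mul_nonneg (by positivity) (modeDecay_pos _ n).le
  have hbound : IntegrableOn (fun s => 2 * M * |dipoleStrength p b lam s|
      + 2 * (Icc (t / 2) T).indicator (fun s => |lam s|) s) (Ioo 0 t) :=
    ((hstrength.mono_set hsub).abs.const_mul _).add <|
      (((integrable_indicator_iff measurableSet_Icc).mpr
        (integrableOn_Icc_of_locallyIntegrableOn_Ioc hlam
          (half_pos ht.1)).abs).const_mul 2).integrableOn
  refine (integrable_prod_iff hmeas).mpr ⟨?_, hbound.mono' hmeas.norm.integral_prod_right' ?_⟩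
  · filter_upwards [ae_restrict_mem measurableSet_Ioo] with s hs
    exact (continuous_dipoleKernel _ _ (sub_pos.mpr hs.2)).integrableOn_Ioc.mul_const _
  · filter_upwards [ae_restrict_mem measurableSet_Ioo] with s hs
    rw [norm_of_nonneg (integral_nonneg fun _ => norm_nonneg _)]
    simp only [norm_mul, norm_eq_abs]
    rw [integral_mul_const]
    rcases lt_or_ge s (t / 2) with hearly | hlate
    · rw [indicator_of_notMem fun h => hearly.not_ge h.1, mul_zero, add_zero, dipoleStrength,
        abs_mul, ← mul_assoc]
      exact mul_le_mul_of_nonneg_right (integral_abs_dipoleKernel_le_mul_abs_dipoleWeight _ _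
        (half_pos ht.1) (by linarith)) (abs_nonneg _)
    · rw [indicator_of_mem (show s ∈ Icc (t / 2) T from ⟨hlate, hs.2.le.trans ht.2⟩)]
      exact le_add_of_nonneg_of_le (by positivity) (mul_le_mul_of_nonneg_right
        (integral_abs_dipoleKernel_le _ _ (sub_pos.mpr hs.2)) (abs_nonneg _))

lemma abs_integral_mul_dipoleKernel_mul_le (p b lam : ℝ → ℝ) {φ : ℝ → ℝ} (hφ : Integrable φ) {C : ℝ}
    (hC : ∀ n : ℤ, |(n : ℝ)| ^ 4 * |∫ x, φ x * cosMode n x| ≤ C) {s t : ℝ} (hst : s < t) :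
    |∫ x, φ x * (dipoleKernel (p s) (b s) (t - s) x * lam s)|
      ≤ (C * ∑' n : ℤ, 1 / (n : ℝ) ^ 2) * |dipoleStrength p b lam s| := by
  simp only [dipoleKernel_mul_eq_dipoleStrength_mul p b lam _ hst, mul_left_comm (φ _)]
  rw [integral_const_mul, abs_mul, mul_comm]
  exact mul_le_mul_of_nonneg_right (abs_integral_mul_dipoleProfile_le hφ hC
    (abs_cos_le_one _) (abs_cos_le_one _) (sub_pos.mpr hst)) (abs_nonneg _)

lemma integrableOn_sourceTerm (hp : ContinuousOn p (Ioc 0 T)) (hb : ContinuousOn b (Ioc 0 T))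
    (hlam : LocallyIntegrableOn lam (Ioc 0 T))
    (hstrength : IntegrableOn (dipoleStrength p b lam) (Ioc 0 T)) {t : ℝ} (ht : t ∈ Ioc 0 T) :
    IntegrableOn (fun x => sourceTerm p b lam x t) (Ioc (-1) 1) := by
  simp only [sourceTerm_eq_integral_Ioo _ _ _ _ ht.1.le]
  exact (integrable_dipoleKernel_mul hp hb hlam hstrength ht).integral_prod_right

theorem abs_integral_mul_sourceTerm_le (hp : ContinuousOn p (Ioc 0 T))
    (hb : ContinuousOn b (Ioc 0 T)) (hlam : LocallyIntegrableOn lam (Ioc 0 T))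
    (hstrength : IntegrableOn (dipoleStrength p b lam) (Ioc 0 T)) {φ : ℝ → ℝ} (hφ : Continuous φ)
    (hφI : ∀ x ∉ Ioc (-1) 1, φ x = 0) {C : ℝ}
    (hC : ∀ n : ℤ, |(n : ℝ)| ^ 4 * |∫ x, φ x * cosMode n x| ≤ C) {t : ℝ} (ht : t ∈ Ioc 0 T) :
    |∫ x in Ioc (-1) 1, φ x * sourceTerm p b lam x t|
      ≤ (C * ∑' n : ℤ, 1 / (n : ℝ) ^ 2) * ∫ s in Ioc 0 t, |dipoleStrength p b lam s| := by
  have hsupp : HasCompactSupport φ :=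
    .intro isCompact_Icc fun x hx => hφI x fun h => hx (Ioc_subset_Icc_self h)
  obtain ⟨B, hB⟩ := hφ.bounded_above_of_compact_support hsupp
  let F : ℝ → ℝ → ℝ := fun s x => φ x * (dipoleKernel (p s) (b s) (t - s) x * lam s)
  have hF : Integrable F.uncurry
      ((volume.restrict (Ioo 0 t)).prod (volume.restrict (Ioc (-1) 1))) :=
    (integrable_dipoleKernel_mul hp hb hlam hstrength ht).bdd_mul
      (hφ.comp continuous_snd).aestronglyMeasurable (.of_forall fun q => hB q.2)
  have hsource (x : ℝ) : φ x * sourceTerm p b lam x t = ∫ s in Ioo 0 t, F s x := by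
    rw [sourceTerm_eq_integral_Ioo _ _ _ _ ht.1.le, integral_const_mul]
  simp only [hsource]
  rw [← integral_integral_swap hF, ← integral_const_mul, integral_Ioc_eq_integral_Ioo,
    ← norm_eq_abs]
  refine norm_integral_le_of_norm_le ((hstrength.mono_set
    (Ioo_subset_Ioc_self.trans (Ioc_subset_Ioc_right ht.2))).abs.const_mul _) ?_
  filter_upwards [ae_restrict_mem measurableSet_Ioo] with s hs
  have hzero : ∀ x ∉ Ioc (-1) 1, F s x = 0 := fun x hx => by simp only [F, hφI x hx, zero_mul]
  rw [setIntegral_eq_integral_of_forall_compl_eq_zero hzero]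
  exact abs_integral_mul_dipoleKernel_mul_le p b lam
    (hφ.integrable_of_hasCompactSupport hsupp) hC hs.2

end

/-! ### The free boundary at small times -/

lemma tendsto_setIntegral_Ioc_nhdsWithin_zero {h : ℝ → ℝ} {T : ℝ} (hh : IntegrableOn h (Ioc 0 T)) :
    Tendsto (fun t => ∫ s in Ioc 0 t, h s) (𝓝[Ioc 0 T] 0) (𝓝 0) := by
  obtain hT | hT := le_or_gt T 0
  · simp only [Ioc_eq_empty_of_le hT, nhdsWithin_empty, tendsto_bot]
  · have hcont := intervalIntegral.continuousOn_primitive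
      ((integrableOn_Icc_iff_integrableOn_Ioc (by finiteness)).mpr hh) 0 (left_mem_Icc.mpr hT.le)
    simp only [ContinuousWithinAt, Ioc_self, setIntegral_empty] at hcont
    exact hcont.mono_left (nhdsWithin_mono _ Ioc_subset_Icc_self)

lemma exists_pos_forall_le_of_eventually {h : ℝ → ℝ} {T c : ℝ} (hh : ContinuousOn h (Ioc 0 T))
    (hpos : ∀ t ∈ Ioc 0 T, 0 < h t) (hc : 0 < c) (hev : ∀ᶠ t in 𝓝[Ioc 0 T] 0, c ≤ h t) :
    ∃ ε > 0, ∀ t ∈ Ioc 0 T, ε ≤ h t := by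
  obtain ⟨δ, hδ, hsmall⟩ := Metric.nhdsWithin_basis_ball.eventually_iff.mp hev
  have hsub : Icc δ T ⊆ Ioc 0 T := fun t ht => ⟨hδ.trans_le ht.1, ht.2⟩
  obtain ⟨m, hm, hlarge⟩ := isCompact_Icc.exists_forall_le' (hh.mono hsub)
    fun t ht => hpos t (hsub ht)
  refine ⟨min c m, lt_min hc hm, fun t ht => ?_⟩
  obtain hlt | hle := lt_or_ge t δ
  · refine (min_le_left _ _).trans (hsmall ⟨?_, ht⟩)
    rwa [Metric.mem_ball, dist_zero_right, norm_of_nonneg ht.1.le]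
  · exact (min_le_right _ _).trans (hlarge t ⟨hle, ht.2⟩)

variable {T : ℝ} {p b lam : ℝ → ℝ}

lemma integrableOn_dipoleStrength_of_sourceTerm_ne_zero (hp : ContinuousOn p (Ioc 0 T))
    (hb : ContinuousOn b (Ioc 0 T)) (hlam : LocallyIntegrableOn lam (Ioc 0 T)) {t : ℝ}
    (ht : t ∈ Ioc 0 T) {c d : ℝ} (hcd : c < d) (hne : ∀ x ∈ Ioo c d, sourceTerm p b lam x t ≠ 0) :
    IntegrableOn (dipoleStrength p b lam) (Ioc 0 T) :=
  integrableOn_dipoleStrength hp hb hlam ht hcd fun x hx =>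
    (intervalIntegrable_iff_integrableOn_Ioc_of_le ht.1.le).mp <| by_contra fun h =>
      -- The integral of a non-integrable function is zero by convention.
      hne x hx (intervalIntegral.integral_undef h)

lemma eventually_exists_neg_le_sourceTerm_of_integrableOn (hp : ContinuousOn p (Ioc 0 T))
    (hb : ContinuousOn b (Ioc 0 T)) (hlam : LocallyIntegrableOn lam (Ioc 0 T))
    (hstrength : IntegrableOn (dipoleStrength p b lam) (Ioc 0 T)) {c d : ℝ} (hcd : c < d)
    (hsub : Ioo c d ⊆ Ioc (-1) 1) {m : ℝ} (hm : 0 < m) :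
    ∀ᶠ t in 𝓝[Ioc 0 T] 0, ∃ x ∈ Ioo c d, -m ≤ sourceTerm p b lam x t := by
  let φ : ContDiffBump ((c + d) / 2) := ⟨(d - c) / 4, (d - c) / 2, by linarith, by linarith⟩
  have hφ0 : ∀ x ∉ Ioo c d, φ x = 0 := fun x hx => by
    rw [← Function.notMem_support, φ.support_eq, Real.ball_eq_Ioo]
    convert! hx using 3 <;> ring
  have hφI : ∀ x ∉ Ioc (-1) 1, φ x = 0 := fun x hx => hφ0 x fun h => hx (hsub h)
  have hφint : 0 < ∫ x in Ioc (-1) 1, φ x := by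
    rw [setIntegral_eq_integral_of_forall_compl_eq_zero hφI]
    exact φ.integral_pos
  obtain ⟨C, hC⟩ := exists_pow_mul_abs_integral_mul_cosMode_le φ.contDiff φ.hasCompactSupport 4
  have hlim : Tendsto
      (fun t => (C * ∑' n : ℤ, 1 / (n : ℝ) ^ 2) * ∫ s in Ioc 0 t, |dipoleStrength p b lam s|)
      (𝓝[Ioc 0 T] 0) (𝓝 0) := by
    simpa only [mul_zero] using (tendsto_setIntegral_Ioc_nhdsWithin_zero hstrength.abs).const_mul _
  filter_upwards [hlim.eventually_lt_const (mul_pos hm hφint), self_mem_nhdsWithin] with t hlt ht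
  by_contra! hsource
  have hint : IntegrableOn (fun x => φ x * sourceTerm p b lam x t) (Ioc (-1) 1) :=
    (integrableOn_sourceTerm hp hb hlam hstrength ht).bdd_mul φ.continuous.aestronglyMeasurable
      (.of_forall fun x => (norm_of_nonneg φ.nonneg).trans_le φ.le_one)
  have hle : ∫ x in Ioc (-1) 1, m * φ x ≤ ∫ x in Ioc (-1) 1, -(φ x * sourceTerm p b lam x t) := by
    refine setIntegral_mono (φ.continuous.integrableOn_Ioc.const_mul m) hint.neg fun x => ?_
    by_cases hx : x ∈ Ioo c d
    · nlinarith [hsource x hx, φ.nonneg (x := x)]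
    · simp only [hφ0 x hx, mul_zero, zero_mul, neg_zero, le_refl]
  rw [integral_const_mul, integral_neg] at hle
  exact hlt.not_ge <| (hle.trans (neg_le_abs _)).trans <|
    abs_integral_mul_sourceTerm_le hp hb hlam hstrength φ.continuous hφI hC ht

theorem eventually_exists_neg_le_sourceTerm (hp : ContinuousOn p (Ioc 0 T))
    (hb : ContinuousOn b (Ioc 0 T)) (hlam : LocallyIntegrableOn lam (Ioc 0 T)) {c d : ℝ}
    (hcd : c < d) (hsub : Ioo c d ⊆ Ioc (-1) 1) {m : ℝ} (hm : 0 < m) :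
    ∀ᶠ t in 𝓝[Ioc 0 T] 0, ∃ x ∈ Ioo c d, -m ≤ sourceTerm p b lam x t := by
  by_cases hstrength : IntegrableOn (dipoleStrength p b lam) (Ioc 0 T)
  · exact eventually_exists_neg_le_sourceTerm_of_integrableOn hp hb hlam hstrength hcd hsub hm
  · filter_upwards [self_mem_nhdsWithin] with t ht
    by_contra! hlt
    exact hstrength <| integrableOn_dipoleStrength_of_sourceTerm_ne_zero hp hb hlam ht hcd
      fun x hx => ((hlt x hx).trans (neg_lt_zero.mpr hm)).ne

theorem eventually_exists_heatFlow_add_sourceTerm_pos (hp : ContinuousOn p (Ioc 0 T))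
    (hb : ContinuousOn b (Ioc 0 T)) (hlam : LocallyIntegrableOn lam (Ioc 0 T)) {g : ℝ → ℝ}
    (hg : ContinuousOn g (Icc (-1) 1)) {x₀ : ℝ} (hx₀ : x₀ ∈ Ioo (-1) 1) (hpos : 0 < g x₀) :
    ∃ c d, -1 < c ∧ d < 1 ∧
      ∀ᶠ t in 𝓝[Ioc 0 T] 0, ∃ x ∈ Ioo c d, 0 < heatFlow g x t + sourceTerm p b lam x t := by
  have hnear : ∀ᶠ x in 𝓝 x₀, x ∈ Ioo (-1) 1 ∧ 0 < g x :=
    (isOpen_Ioo.eventually_mem hx₀).and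
      ((hg.continuousAt (Icc_mem_nhds hx₀.1 hx₀.2)).eventually_const_lt hpos)
  obtain ⟨r, hr, hball⟩ := (nhds_basis_Icc_pos x₀).mem_iff.mp hnear
  have hlr : x₀ - r < x₀ + r := by linarith
  have hsub : Icc (x₀ - r) (x₀ + r) ⊆ Ioo (-1) 1 := fun x hx => (hball hx).1
  refine ⟨x₀ - r, x₀ + r, (hsub (left_mem_Icc.mpr hlr.le)).1,
    (hsub (right_mem_Icc.mpr hlr.le)).2, ?_⟩
  obtain ⟨m, hm, hflow⟩ := eventually_forall_lt_heatFlow hg (hsub.trans Ioo_subset_Icc_self)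
    fun x hx => (hball hx).2
  filter_upwards [hflow.filter_mono (nhdsWithin_mono _ Ioc_subset_Ioi_self),
    eventually_exists_neg_le_sourceTerm hp hb hlam hlr
      ((Ioo_subset_Icc_self.trans hsub).trans Ioo_subset_Ioc_self) hm] with t hlt ⟨x, hx, hle⟩
  exact ⟨x, hx, by linarith [hlt x (Ioo_subset_Icc_self hx)]⟩

lemma heatFlow_neg (g : ℝ → ℝ) (x t : ℝ) : heatFlow (-g) x t = -heatFlow g x t := by
  simp only [heatFlow, Pi.neg_apply, mul_neg, intervalIntegral.integral_neg]

lemma sourceTerm_neg (p b lam : ℝ → ℝ) (x t : ℝ) :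
    sourceTerm p b (-lam) x t = -sourceTerm p b lam x t := by
  simp only [sourceTerm, Pi.neg_apply, mul_neg, intervalIntegral.integral_neg]

namespace IsSolutionP

variable {a : ℝ} {fI : ℝ → ℝ} {f : ℝ → ℝ → ℝ}

lemma eq_heatFlow_add_sourceTerm {J : Set ℝ} (hsol : IsSolutionP a fI J f p) {x t : ℝ} (ht : t ∈ J)
    (hx : x ∈ Icc (-1) 1) :
    f x t = heatFlow fI x t + sourceTerm p (abar a p) (flux f p) x t :=
  hsol.duhamel t ht x hx

lemma continuousOn_abar {J : Set ℝ} (hsol : IsSolutionP a fI J f p) :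
    ContinuousOn (abar a p) J :=
  continuousOn_const.inf ((continuousOn_const.sub hsol.p_cont).inf
    (continuousOn_const.add hsol.p_cont))

theorem exists_eventually_le_freeBoundary (hsol : IsSolutionP a fI (Ioc 0 T) f p)
    (hfI : ContinuousOn fI (Icc (-1) 1)) {x₀ : ℝ} (hx₀ : x₀ ∈ Ioo (-1) 1) (hpos : 0 < fI x₀) :
    ∃ c > -1, ∀ᶠ t in 𝓝[Ioc 0 T] 0, c ≤ p t := by
  obtain ⟨c, d, hc, hd, hev⟩ := eventually_exists_heatFlow_add_sourceTerm_pos hsol.p_cont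
    hsol.continuousOn_abar hsol.flux_loc_int hfI hx₀ hpos
  refine ⟨c, hc, ?_⟩
  filter_upwards [hev, self_mem_nhdsWithin] with t ⟨x, hx, hfx⟩ ht
  have hx1 : x ≤ 1 := (hx.2.trans hd).le
  rw [← hsol.eq_heatFlow_add_sourceTerm ht ⟨(hc.trans hx.1).le, hx1⟩] at hfx
  by_contra! hlt
  exact (hsol.neg_right t ht x ⟨hlt.trans hx.1, hx1⟩).not_gt hfx

theorem exists_eventually_freeBoundary_le (hsol : IsSolutionP a fI (Ioc 0 T) f p)
    (hfI : ContinuousOn fI (Icc (-1) 1)) {x₀ : ℝ} (hx₀ : x₀ ∈ Ioo (-1) 1) (hneg : fI x₀ < 0) :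
    ∃ d < 1, ∀ᶠ t in 𝓝[Ioc 0 T] 0, p t ≤ d := by
  obtain ⟨c, d, hc, hd, hev⟩ := eventually_exists_heatFlow_add_sourceTerm_pos hsol.p_cont
    hsol.continuousOn_abar hsol.flux_loc_int.neg hfI.neg hx₀ (neg_pos.mpr hneg)
  refine ⟨d, hd, ?_⟩
  filter_upwards [hev, self_mem_nhdsWithin] with t ⟨x, hx, hfx⟩ ht
  have hx1 : -1 ≤ x := (hc.trans hx.1).le
  rw [heatFlow_neg, sourceTerm_neg, ← neg_add,
    ← hsol.eq_heatFlow_add_sourceTerm ht ⟨hx1, (hx.2.trans hd).le⟩, neg_pos] at hfx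
  by_contra! hlt
  exact (hsol.pos_left t ht x ⟨hx1, hx.2.trans hlt⟩).not_gt hfx

end IsSolutionP

end

theorem statement12_general {T a : ℝ} {fI : ℝ → ℝ} {f : ℝ → ℝ → ℝ} {p : ℝ → ℝ}
    (hfI : ContinuousOn fI (Set.Icc (-1) 1)) (hpos : ∃ x ∈ Set.Ioo (-1) 1, 0 < fI x)
    (hneg : ∃ x ∈ Set.Ioo (-1) 1, fI x < 0) (hsol : IsSolutionP a fI (Set.Ioc 0 T) f p) :
    ∃ ε > (0 : ℝ), ∀ t ∈ Set.Ioc (0 : ℝ) T, p t ∈ Set.Icc (-1 + ε) (1 - ε) := by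
  obtain ⟨xl, hxl, hfl⟩ := hpos
  obtain ⟨xr, hxr, hfr⟩ := hneg
  obtain ⟨c, hc, hcp⟩ := hsol.exists_eventually_le_freeBoundary hfI hxl hfl
  obtain ⟨d, hd, hpd⟩ := hsol.exists_eventually_freeBoundary_le hfI hxr hfr
  obtain ⟨ε, hε, hεp⟩ := exists_pos_forall_le_of_eventually (h := fun t => p t + 1)
    (hsol.p_cont.add continuousOn_const) (fun t ht => by linarith [(hsol.p_mem t ht).1])
    (c := c + 1) (by linarith) (hcp.mono fun t ht => by linarith)
  obtain ⟨η, hη, hηp⟩ := exists_pos_forall_le_of_eventually (h := fun t => 1 - p t)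
    (continuousOn_const.sub hsol.p_cont) (fun t ht => by linarith [(hsol.p_mem t ht).2])
    (c := 1 - d) (by linarith) (hpd.mono fun t ht => by linarith)
  exact ⟨min ε η, lt_min hε hη, fun t ht =>
    ⟨by linarith [hεp t ht, min_le_left ε η], by linarith [hηp t ht, min_le_right ε η]⟩⟩

/-- The rescue plan works (Corollary 3.2): the free boundary stays away from the
Neumann boundaries: there is `ε > 0` with `p(t) ∈ [−1+ε, 1−ε]` for all `t ∈ (0,T]`. -/
theorem statement12 (T a a₀ lamI : ℝ) (fI : ℝ → ℝ) (pI : ℝ)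
    (f : ℝ → ℝ → ℝ) (p : ℝ → ℝ)
    (ha : a ∈ Set.Ioo (0:ℝ) 1) (ha₀ : 0 < a₀) (ha₀' : a₀ < a / 4)
    (hI : IsInitialDatum fI pI a₀ lamI)
    (hsol : IsSolutionP a fI (Set.Ioc 0 T) f p) :
    ∃ ε > (0:ℝ), ∀ t ∈ Set.Ioc (0:ℝ) T, p t ∈ Set.Icc (-1 + ε) (1 - ε) := by
  have ⟨xl, hxl⟩ := exists_between hI.pI_mem.1
  have ⟨xr, hxr⟩ := exists_between hI.pI_mem.2
  exact statement12_general hI.smooth.continuousOn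
    ⟨xl, ⟨hxl.1, hxl.2.trans hI.pI_mem.2⟩, hI.pos_left xl ⟨hxl.1.le, hxl.2⟩⟩
    ⟨xr, ⟨hI.pI_mem.1.trans hxr.1, hxr.2⟩, hI.neg_right xr ⟨hxr.1, hxr.2.le⟩⟩ hsol
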